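/- Let F_i(x) = xᵀ M_i x (i = 1,2) with M₁, M₂ symmetric integer s×s matrices. Let c ∈ ℤ² be primitive with det(M_c) ≠ 0, where M_c = c₁M₁ + c₂M₂, and set F*_c(u) = uᵀ adj(M_c) u, where adj denotes the adjugate matrix (so F*_c(u) = det(M_c) · uᵀ M_c^{−1} u). Let p be a prime with p ∤ 2 det(M_c), let k ≥ 1 be an integer, and let u ∈ ℤ^s. Then: (i) if s is even, or if s is odd and k is even, |S_{p^k, c}(u)| ≤ p^{sk/2} · gcd(F*_c(u), p^k); (ii) if s and k are both odd, then S_{p^k, c}(u) = 0 whenever F*_c(u) = 0, and |S_{p^k, c}(u)| ≤ p^{k(s+1)/2} · gcd(F*_c(u), p^k)^{1/2} otherwise. (Here gcd(0, p^k) = p^k.) -/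

import Mathlib

open MeasureTheory Real Matrix Finset

noncomputable section

/-- `e(x) = exp(2πix)`. -/
def e2pi (x : ℝ) : ℂ := Complex.exp (2 * Real.pi * Complex.I * x)

/-- Euclidean norm on `ℝ²`. -/
def nrm2 (x : ℝ × ℝ) : ℝ := Real.sqrt (x.1 ^ 2 + x.2 ^ 2)

/-- Dot product on `ℝ²`. -/
def dot2 (x y : ℝ × ℝ) : ℝ := x.1 * y.1 + x.2 * y.2

/-- `x^⊥ = (x₂, -x₁)`. -/
def perp2 (x : ℝ × ℝ) : ℝ × ℝ := (x.2, -x.1)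

/-- `δ_n` for `n ∈ ℤ²`. -/
def deltaInt (n : ℤ × ℤ) : ℂ := if n = 0 then 1 else 0

/-- `h(y,z) = Σ_{j ≥ 1} (1/(yj)) (ω(yj) − ω(|z|/(yj)))`. -/
def hFun (ω : ℝ → ℝ) (y z : ℝ) : ℝ :=
  ∑' j : ℕ+, (1 / (y * ((j : ℕ) : ℝ))) *
    (ω (y * ((j : ℕ) : ℝ)) - ω (|z| / (y * ((j : ℕ) : ℝ))))

/-- `c = (∫_{ℝ²} ω(|x|) dx)⁻¹`. -/
def cConst (ω : ℝ → ℝ) : ℝ := (∫ x : ℝ × ℝ, ω (nrm2 x))⁻¹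

/-- The function `p_{1,q}`. -/
def p1 (ω ω₀ : ℝ → ℝ) (Q : ℝ) (q : ℕ) (w : ℝ × ℝ) : ℂ :=
  -(cConst ω / Q : ℝ) * ∫ x : ℝ × ℝ,
    (((ω₀ (nrm2 x / Q ^ ((3 : ℝ) / 2)) *
      ∑' j : ℕ+, (1 / ((q : ℝ) * ((j : ℕ) : ℝ)) ^ 2) *
        ω (nrm2 x / (((j : ℕ) : ℝ) * (q : ℝ) * Q ^ ((1 : ℝ) / 2)))) : ℝ) : ℂ) *
      e2pi (-(dot2 w x))

/-- The function `p_{2,r,k,q}` (with `q` allowed to be a real parameter). -/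
def p2 (ω ω₀ : ℝ → ℝ) (Q : ℝ) (r : ℤ × ℤ) (k : ℕ) (q : ℝ) (w : ℝ × ℝ) : ℂ :=
  ((cConst ω / Q ^ 3 : ℝ) : ℂ) * ∫ x : ℝ × ℝ,
    (((ω₀ (nrm2 x / Q ^ ((3 : ℝ) / 2)) *
      hFun ω ((k : ℝ) * q / Q) (((r.1 : ℝ) * x.1 + (r.2 : ℝ) * x.2) / Q ^ 2)) : ℝ) : ℂ) *
      e2pi (-(dot2 w x))

/-- The lattice `Λ(a,q) = {k a + q y}` as a subset of `ℤ²`. -/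
def Lambda (a : ℤ × ℤ) (q : ℕ) : Set (ℤ × ℤ) :=
  {v | ∃ k : ℤ, ∃ y : ℤ × ℤ, v = (k * a.1 + (q : ℤ) * y.1, k * a.2 + (q : ℤ) * y.2)}

/-- `k(r) = gcd(r₁,r₂)/gcd(gcd(r₁,r₂),q)`. -/
def kOf (r : ℤ × ℤ) (q : ℕ) : ℕ := Int.gcd r.1 r.2 / Nat.gcd (Int.gcd r.1 r.2) q

/-- The function `p_{Λ(a,q)}`. -/
def pLambda (ω ω₀ : ℝ → ℝ) (Q : ℝ) (q : ℕ) (a : ℤ × ℤ) (w : ℝ × ℝ) : ℂ :=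
  p1 ω ω₀ Q q w +
    ∑' r : ℤ × ℤ,
      Set.indicator {r : ℤ × ℤ | r ∈ Lambda a q ∧ r ≠ 0}
        (fun r => ((ω (nrm2 ((r.1 : ℝ), (r.2 : ℝ)) / Q ^ ((1 : ℝ) / 2)) : ℝ) : ℂ) *
          p2 ω ω₀ Q r (kOf r q) (q : ℝ) w) r

/-- Reduced residues `a mod q` (canonical representatives) with `gcd(a₁,a₂,q)=1`. -/
def residues (q : ℕ) : Finset (ℕ × ℕ) :=
  ((Finset.range q) ×ˢ (Finset.range q)).filter (fun a => Nat.gcd (Nat.gcd a.1 a.2) q = 1)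

/-- Normalized directional derivative along `ξ`. -/
def dirDeriv (ξ : ℝ × ℝ) (f : ℝ × ℝ → ℂ) : ℝ × ℝ → ℂ :=
  fun w => fderiv ℝ f w (ξ.1 / nrm2 ξ, ξ.2 / nrm2 ξ)

/-- Fourier transform `ω̂₀(t) = ∫ ω₀(x) e(−xt) dx`. -/
def fourierW0 (ω₀ : ℝ → ℝ) (t : ℝ) : ℂ := ∫ x : ℝ, ((ω₀ x : ℝ) : ℂ) * e2pi (-(x * t))

/-- `|M(w)x|` for the 3×2 matrix `M(w)`. -/
def Mnorm (Q : ℝ) (w : ℝ × ℝ) (x : ℝ × ℝ) : ℝ :=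
  Real.sqrt (x.1 ^ 2 / Q + x.2 ^ 2 / Q + Q ^ 2 * (w.1 * x.2 - w.2 * x.1) ^ 2)

/-- `μ_{M(w)}(Λ(a,q))`: infimum of `|M(w)x|` over nonzero lattice points. -/
def muM (Q : ℝ) (w : ℝ × ℝ) (a : ℤ × ℤ) (q : ℕ) : ℝ :=
  sInf {t : ℝ | ∃ v : ℤ × ℤ, v ∈ Lambda a q ∧ v ≠ 0 ∧ t = Mnorm Q w ((v.1 : ℝ), (v.2 : ℝ))}

/-- Quadratic form attached to an integer matrix, over any commutative ring. -/
def quadEval {s : ℕ} {R : Type*} [CommRing R] (M : Matrix (Fin s) (Fin s) ℤ)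
    (x : Fin s → R) : R :=
  ∑ i, ∑ j, (M i j : R) * x i * x j

/-- `e_q(n) = exp(2πin/q)` for an integer `n`. -/
def eqc (q : ℕ) (n : ℤ) : ℂ := e2pi ((n : ℝ) / (q : ℝ))

/-- The exponential sum `D_q(u)`. -/
def Dq (s : ℕ) (M₁ M₂ : Matrix (Fin s) (Fin s) ℤ) (q : ℕ) (u : Fin s → ℤ) : ℂ :=
  ∑ a ∈ residues q, ∑ b ∈ Fintype.piFinset (fun _ : Fin s => Finset.range q),
    eqc q ((a.1 : ℤ) * quadEval M₁ (fun i => (b i : ℤ)) +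
      (a.2 : ℤ) * quadEval M₂ (fun i => (b i : ℤ)) + ∑ i, (b i : ℤ) * u i)

/-- The exponential sum `S_{q,dc}(u)`. -/
def Sq (s : ℕ) (M₁ M₂ : Matrix (Fin s) (Fin s) ℤ) (q d : ℕ) (c : ℤ × ℤ)
    (u : Fin s → ℤ) : ℂ :=
  ∑ a ∈ (residues q).filter
      (fun a => (q : ℤ) ∣ (d : ℤ) * (c.1 * (a.2 : ℤ) - c.2 * (a.1 : ℤ))),
    ∑ b ∈ Fintype.piFinset (fun _ : Fin s => Finset.range q),
      eqc q ((a.1 : ℤ) * quadEval M₁ (fun i => (b i : ℤ)) +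
        (a.2 : ℤ) * quadEval M₂ (fun i => (b i : ℤ)) + ∑ i, (b i : ℤ) * u i)

/-- The pair of quadratic forms given by `M₁, M₂` is nonsingular: at every nonzero
complex common zero the gradients (equivalently `M₁x`, `M₂x`) are linearly independent. -/
def NonsingularPair (s : ℕ) (M₁ M₂ : Matrix (Fin s) (Fin s) ℤ) : Prop :=
  ∀ x : Fin s → ℂ, x ≠ 0 →
    quadEval M₁ x = 0 → quadEval M₂ x = 0 →
    LinearIndependent ℂ
      ![(M₁.map (fun z : ℤ => (z : ℂ))).mulVec x, (M₂.map (fun z : ℤ => (z : ℂ))).mulVec x]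

/-- Euclidean norm on `Fin m → ℝ`. -/
def enorm' {m : ℕ} (v : Fin m → ℝ) : ℝ := Real.sqrt (∑ i, v i ^ 2)

end


open QuadraticMap (polar polar_smul_left polar_smul_right polarBilin_apply_apply)

section GaussSum

variable {q : ℕ} [NeZero q] {V : Type*} [AddCommGroup V] [Module (ZMod q) V] [Fintype V]

/-- The Gauss sum `∑ₓ e_q(t Q(x))` of a quadratic form over `ℤ/qℤ`. -/
noncomputable def quadGaussSum (Q : QuadraticForm (ZMod q) V) (t : ZMod q) : ℂ :=
  ∑ x : V, ZMod.stdAddChar (t * Q x)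

lemma exists_stdAddChar_mul_ne_one {a : ZMod q} (ha : a ≠ 0) :
    ∃ r : ZMod q, ZMod.stdAddChar (a * r) ≠ (1 : ℂ) := by
  have h := ZMod.isPrimitive_stdAddChar q ha
  contrapose! h
  ext r
  simpa [AddChar.mulShift_apply] using h r

lemma sum_stdAddChar_linear (f : V →ₗ[ZMod q] ZMod q) [Decidable (f = 0)] :
    ∑ y : V, (ZMod.stdAddChar (f y) : ℂ) = if f = 0 then (Fintype.card V : ℂ) else 0 := by
  split_ifs with h
  · simp [h]
  · obtain ⟨y, hy⟩ : ∃ y, f y ≠ 0 := by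
      by_contra! h'
      exact h (LinearMap.ext h')
    obtain ⟨r, hr⟩ := exists_stdAddChar_mul_ne_one hy
    have key : (ZMod.stdAddChar (f y * r) : ℂ) * ∑ y : V, (ZMod.stdAddChar (f y) : ℂ)
        = ∑ y : V, (ZMod.stdAddChar (f y) : ℂ) := by
      rw [Finset.mul_sum, ← Equiv.sum_comp (Equiv.addLeft (r • y))
        (fun y => (ZMod.stdAddChar (f y) : ℂ))]
      refine Finset.sum_congr rfl fun x _ => ?_
      simp [AddChar.map_add_eq_mul, mul_comm r]
    have : ((ZMod.stdAddChar (f y * r) : ℂ) - 1) * ∑ y : V, (ZMod.stdAddChar (f y) : ℂ) = 0 := by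
      rw [sub_mul, key, one_mul, sub_self]
    exact (mul_eq_zero.mp this).resolve_left (sub_ne_zero.mpr hr)

lemma sum_stdAddChar_polar {Q : QuadraticForm (ZMod q) V} (hQ : Q.polarBilin.SeparatingLeft)
    (t : ZMod q) (x : V) [Decidable (t • x = 0)] :
    ∑ y : V, (ZMod.stdAddChar (t * polar Q x y) : ℂ)
      = if t • x = 0 then (Fintype.card V : ℂ) else 0 := by
  classical
  have h := sum_stdAddChar_linear (Q.polarBilin (t • x))
  simp only [polarBilin_apply_apply, polar_smul_left, smul_eq_mul] at h
  rw [h]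
  have : Q.polarBilin (t • x) = 0 ↔ t • x = 0 :=
    ⟨fun h => hQ _ fun y => by rw [h]; rfl, fun h => by rw [h, map_zero]⟩
  simp only [this]

lemma conj_quadGaussSum (Q : QuadraticForm (ZMod q) V) (t : ZMod q) :
    (starRingEnd ℂ) (quadGaussSum Q t) = ∑ x : V, ZMod.stdAddChar (-(t * Q x)) := by
  simp only [quadGaussSum, map_sum, AddChar.map_neg_eq_conj]

lemma norm_quadGaussSum_sq {Q : QuadraticForm (ZMod q) V} (hQ : Q.polarBilin.SeparatingLeft)
    {t : ZMod q} (ht : IsUnit t) : ‖quadGaussSum Q t‖ ^ 2 = Fintype.card V := by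
  classical
  have h : quadGaussSum Q t * (starRingEnd ℂ) (quadGaussSum Q t) = Fintype.card V := by
    calc quadGaussSum Q t * (starRingEnd ℂ) (quadGaussSum Q t)
        = ∑ y : V, ∑ x : V, (ZMod.stdAddChar (t * Q x - t * Q y) : ℂ) := by
          rw [conj_quadGaussSum, quadGaussSum, Finset.sum_mul_sum, Finset.sum_comm]
          simp only [sub_eq_add_neg, AddChar.map_add_eq_mul]
      _ = ∑ y : V, ∑ x : V, (ZMod.stdAddChar (t * Q x) : ℂ) *
            ZMod.stdAddChar (t * polar Q x y) := by
          refine Finset.sum_congr rfl fun y _ => ?_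
          rw [← Equiv.sum_comp (Equiv.addRight y)]
          refine Finset.sum_congr rfl fun x _ => ?_
          rw [← AddChar.map_add_eq_mul, Equiv.coe_addRight, QuadraticMap.map_add Q]
          congr 1
          ring
      _ = ∑ x : V, (ZMod.stdAddChar (t * Q x) : ℂ) *
            (if t • x = 0 then (Fintype.card V : ℂ) else 0) := by
          rw [Finset.sum_comm]
          refine Finset.sum_congr rfl fun x _ => ?_
          rw [← Finset.mul_sum, sum_stdAddChar_polar hQ]
      _ = Fintype.card V := by
          simp [ht.smul_eq_zero]
  have h2 := Complex.mul_conj' (quadGaussSum Q t)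
  rw [h] at h2
  exact_mod_cast h2.symm

lemma quadGaussSum_ne_zero {Q : QuadraticForm (ZMod q) V} (hQ : Q.polarBilin.SeparatingLeft)
    {t : ZMod q} (ht : IsUnit t) : quadGaussSum Q t ≠ 0 := by
  intro h
  have h1 := norm_quadGaussSum_sq hQ ht
  rw [h, norm_zero] at h1
  have : (Fintype.card V : ℝ) ≠ 0 := Nat.cast_ne_zero.mpr Fintype.card_ne_zero
  exact this (by rw [← h1]; norm_num)

lemma quadGaussSum_mul_sq (Q : QuadraticForm (ZMod q) V) (t : ZMod q) {r : ZMod q}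
    (hr : IsUnit r) : quadGaussSum Q (t * r ^ 2) = quadGaussSum Q t := by
  obtain ⟨r, rfl⟩ := hr
  rw [quadGaussSum, quadGaussSum, ← Equiv.sum_comp (MulAction.toPerm r)
    (fun x => (ZMod.stdAddChar (t * Q x) : ℂ))]
  refine Finset.sum_congr rfl fun x _ => ?_
  rw [MulAction.toPerm_apply, Units.smul_def, QuadraticMap.map_smul, smul_eq_mul]
  congr 1
  ring

lemma quadGaussSum_add_sq_sq (Q : QuadraticForm (ZMod q) V) {a b : ZMod q}
    (h : IsUnit (a ^ 2 + b ^ 2)) :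
    quadGaussSum Q (a ^ 2 + b ^ 2) ^ 2 = quadGaussSum Q 1 ^ 2 := by
  have key : ∀ t, quadGaussSum Q t ^ 2
      = ∑ z : V × V, (ZMod.stdAddChar (t * (Q z.1 + Q z.2)) : ℂ) := by
    intro t
    rw [quadGaussSum, sq, Finset.sum_mul_sum, Fintype.sum_prod_type]
    simp only [mul_add, AddChar.map_add_eq_mul]
  rw [key, key]
  obtain ⟨c, hc⟩ := h.exists_left_inv
  let e : V × V → V × V := fun z => (a • z.1 + (-b) • z.2, b • z.1 + a • z.2)
  have he : Function.Bijective e := by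
    rw [← Finite.injective_iff_bijective]
    intro z w hzw
    have hl : ∀ z : V × V,
        z = (c • (a • (e z).1 + b • (e z).2), c • (-b • (e z).1 + a • (e z).2)) := by
      intro z
      have h1 : c • (a • (e z).1 + b • (e z).2) = (c * (a ^ 2 + b ^ 2)) • z.1 := by
        simp only [e]; module
      have h2 : c • (-b • (e z).1 + a • (e z).2) = (c * (a ^ 2 + b ^ 2)) • z.2 := by
        simp only [e]; module
      rw [h1, h2, hc, one_smul, one_smul]
    rw [hl z, hl w, hzw]
  rw [← Function.Bijective.sum_comp he (fun z => (ZMod.stdAddChar (1 * (Q z.1 + Q z.2)) : ℂ))]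
  refine Finset.sum_congr rfl fun z _ => ?_
  congr 1
  simp only [e, QuadraticMap.map_add Q, QuadraticMap.map_smul, polar_smul_left, polar_smul_right,
    smul_eq_mul]
  ring

lemma quadGaussSum_prod {W : Type*} [AddCommGroup W] [Module (ZMod q) W] [Fintype W]
    (Q : QuadraticForm (ZMod q) V) (Q' : QuadraticForm (ZMod q) W) (t : ZMod q) :
    quadGaussSum (Q.prod Q') t = quadGaussSum Q t * quadGaussSum Q' t := by
  simp only [quadGaussSum, Finset.sum_mul_sum, Fintype.sum_prod_type, QuadraticMap.prod_apply,
    mul_add, AddChar.map_add_eq_mul]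

omit [NeZero q] [Fintype V] in
lemma separatingLeft_polarBilin_prod {W : Type*} [AddCommGroup W] [Module (ZMod q) W]
    {Q : QuadraticForm (ZMod q) V} {Q' : QuadraticForm (ZMod q) W}
    (hQ : Q.polarBilin.SeparatingLeft) (hQ' : Q'.polarBilin.SeparatingLeft) :
    (Q.prod Q').polarBilin.SeparatingLeft := by
  rintro ⟨x, y⟩ h
  ext
  · exact hQ _ fun z => by simpa using h (z, 0)
  · exact hQ' _ fun z => by simpa using h (0, z)

lemma quadGaussSum_eq_of_sq_eq_zero {Q : QuadraticForm (ZMod q) V}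
    (hQ : Q.polarBilin.SeparatingLeft) {m : ZMod q} (hm : m ^ 2 = 0)
    (hV : ∀ x : V, m • x = 0 → ∃ y : V, x = m • y) {t : ZMod q} (ht : IsUnit t) :
    quadGaussSum Q t = quadGaussSum Q 1 := by
  classical
  have hQm : ∀ y, Q (m • y) = 0 := fun y => by
    rw [QuadraticMap.map_smul, ← sq, hm, zero_smul]
  have key : ∀ t : ZMod q, IsUnit t →
      quadGaussSum Q t = ∑ x : V, if m • x = 0 then (1 : ℂ) else 0 := by
    intro t ht
    have hc : (Fintype.card V : ℂ) ≠ 0 := Nat.cast_ne_zero.mpr Fintype.card_ne_zero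
    refine mul_left_cancel₀ hc ?_
    calc (Fintype.card V : ℂ) * quadGaussSum Q t
        = ∑ y : V, ∑ x : V, (ZMod.stdAddChar (t * Q (x + m • y)) : ℂ) := by
          rw [← nsmul_eq_mul, ← Finset.card_univ, ← Finset.sum_const]
          refine Finset.sum_congr rfl fun y _ => ?_
          exact (Equiv.sum_comp (Equiv.addRight (m • y))
            (fun x => (ZMod.stdAddChar (t * Q x) : ℂ))).symm
      _ = ∑ x : V, (ZMod.stdAddChar (t * Q x) : ℂ) *
            ∑ y : V, (ZMod.stdAddChar ((t * m) * polar Q x y) : ℂ) := by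
          rw [Finset.sum_comm]
          refine Finset.sum_congr rfl fun x _ => ?_
          rw [Finset.mul_sum]
          refine Finset.sum_congr rfl fun y _ => ?_
          rw [← AddChar.map_add_eq_mul, QuadraticMap.map_add Q, hQm, polar_smul_right, smul_eq_mul]
          congr 1
          ring
      _ = _ := by
          rw [Finset.mul_sum]
          refine Finset.sum_congr rfl fun x _ => ?_
          rw [sum_stdAddChar_polar hQ, mul_smul, ht.smul_eq_zero]
          split_ifs with h
          · obtain ⟨y, rfl⟩ := hV x h
            simp [hQm]
          · simp
  rw [key t ht, key 1 isUnit_one]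

lemma sum_units_quadGaussSum_shift (Q : QuadraticForm (ZMod q) V) (w : V) :
    ∑ t : (ZMod q)ˣ, ∑ x : V, (ZMod.stdAddChar ((t : ZMod q) * Q x + polar Q x w) : ℂ)
      = ∑ t : (ZMod q)ˣ, quadGaussSum Q t * ZMod.stdAddChar ((t : ZMod q) * -Q w) := by
  rw [← Equiv.sum_comp (Equiv.inv (ZMod q)ˣ)
    (fun t : (ZMod q)ˣ => quadGaussSum Q t * (ZMod.stdAddChar ((t : ZMod q) * -Q w) : ℂ))]
  refine Finset.sum_congr rfl fun t _ => ?_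
  have h1 : quadGaussSum Q ((t⁻¹ : (ZMod q)ˣ) : ZMod q) = quadGaussSum Q t := by
    rw [← quadGaussSum_mul_sq Q _ t.isUnit, sq, ← mul_assoc, Units.inv_mul, one_mul]
  rw [Equiv.inv_apply, h1, quadGaussSum, Finset.sum_mul,
    ← Equiv.sum_comp (Equiv.addRight (((t⁻¹ : (ZMod q)ˣ) : ZMod q) • w))
      (fun x => (ZMod.stdAddChar ((t : ZMod q) * Q x) : ℂ) * _)]
  refine Finset.sum_congr rfl fun x _ => ?_
  rw [← AddChar.map_add_eq_mul, Equiv.coe_addRight, QuadraticMap.map_add Q, QuadraticMap.map_smul,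
    polar_smul_right, smul_eq_mul, smul_eq_mul]
  congr 1
  have := t.mul_inv
  linear_combination (-polar Q x w - ((t⁻¹ : (ZMod q)ˣ) : ZMod q) * Q w) * this

end GaussSum

section PrimePower

variable {p k : ℕ} [Fact p.Prime]

lemma isUnit_or_exists_eq_prime_mul (x : ZMod (p ^ k)) : IsUnit x ∨ ∃ y, x = p * y := by
  have hp : p.Prime := Fact.out
  by_cases h : p ∣ x.val
  · right
    obtain ⟨m, hm⟩ := h
    exact ⟨m, by rw [← ZMod.natCast_zmod_val x, hm, Nat.cast_mul]⟩
  · left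
    rw [← ZMod.natCast_zmod_val x, ZMod.isUnit_iff_coprime]
    exact Nat.Coprime.pow_right _ ((hp.coprime_iff_not_dvd.mpr h).symm)

omit [Fact p.Prime] in
lemma prime_pow_eq_zero : (p : ZMod (p ^ k)) ^ k = 0 := by
  rw [← Nat.cast_pow, ZMod.natCast_self]

omit [Fact p.Prime] in
lemma isNilpotent_prime : IsNilpotent (p : ZMod (p ^ k)) := ⟨k, prime_pow_eq_zero⟩

omit [Fact p.Prime] in
lemma IsUnit.add_prime_mul {t : ZMod (p ^ k)} (ht : IsUnit t) (j : ZMod (p ^ k)) :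
    IsUnit (t + p * j) :=
  ((Commute.all _ j).isNilpotent_mul_right isNilpotent_prime).isUnit_add_left_of_commute ht
    (Commute.all _ _)

lemma exists_isUnit_one_add_prime_mul_eq_sq (hp2 : p ≠ 2) (hk : k ≠ 0) (j : ZMod (p ^ k)) :
    ∃ r : ZMod (p ^ k), IsUnit r ∧ 1 + p * j = r ^ 2 := by
  have hp : p.Prime := Fact.out
  obtain ⟨m, rfl⟩ := Nat.exists_eq_succ_of_ne_zero hk
  have h : ((p : ZMod (p ^ (m + 1))) ^ (m + 1)) ∣ (1 + p * j) ^ p ^ m - 1 ^ p ^ m :=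
    dvd_sub_pow_of_dvd_sub (by simp) m
  rw [prime_pow_eq_zero, zero_dvd_iff, one_pow, sub_eq_zero] at h
  obtain ⟨c, hc⟩ : Odd (p ^ m) := (hp.odd_of_ne_two hp2).pow
  refine ⟨(1 + p * j) ^ (c + 1), (isUnit_one.add_prime_mul j).pow _, ?_⟩
  rw [← pow_mul, show (c + 1) * 2 = 2 * c + 1 + 1 by ring, ← hc,
    pow_succ (1 + (p : ZMod (p ^ (m + 1))) * j), h,
    one_mul]

lemma exists_sq_add_sq_eq_mul_sq (hp2 : p ≠ 2) (hk : k ≠ 0) {t : ZMod (p ^ k)} (ht : IsUnit t) :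
    ∃ a b r : ZMod (p ^ k), IsUnit r ∧ a ^ 2 + b ^ 2 = t * r ^ 2 := by
  obtain ⟨a, b, hab⟩ := ZMod.sq_add_sq p (t.val : ZMod p)
  obtain ⟨a, rfl⟩ := ZMod.intCast_surjective a
  obtain ⟨b, rfl⟩ := ZMod.intCast_surjective b
  have h : (((a ^ 2 + b ^ 2 - t.val : ℤ)) : ZMod p) = 0 := by
    push_cast
    rw [hab, sub_self]
  rw [ZMod.intCast_zmod_eq_zero_iff_dvd] at h
  obtain ⟨c, hc⟩ := h
  have h2 : (a : ZMod (p ^ k)) ^ 2 + (b : ZMod (p ^ k)) ^ 2 = t + p * c := by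
    have := congrArg (Int.cast : ℤ → ZMod (p ^ k)) hc
    push_cast at this
    rw [ZMod.natCast_zmod_val] at this
    linear_combination this
  obtain ⟨t', ht'⟩ := ht.exists_right_inv
  obtain ⟨r, hr, hr2⟩ := exists_isUnit_one_add_prime_mul_eq_sq hp2 hk (t' * c)
  refine ⟨a, b, r, hr, ?_⟩
  rw [h2, ← hr2]
  linear_combination (-(p : ZMod (p ^ k)) * c) * ht'

lemma exists_isUnit_forall_eq_sq_or (hp2 : p ≠ 2) :
    ∃ v : ZMod (p ^ k), IsUnit v ∧
      ∀ t, IsUnit t → ∃ r, IsUnit r ∧ (t = r ^ 2 ∨ t = v * r ^ 2) := by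
  have := ZMod.isCyclic_units_of_prime_pow p Fact.out hp2 k
  obtain ⟨g, hg⟩ := IsCyclic.exists_generator (α := (ZMod (p ^ k))ˣ)
  refine ⟨g, g.isUnit, ?_⟩
  rintro _ ⟨t, rfl⟩
  obtain ⟨n, rfl⟩ := hg t
  obtain ⟨m, rfl | rfl⟩ := Int.even_or_odd' n
  · refine ⟨((g ^ m : (ZMod (p ^ k))ˣ) : ZMod (p ^ k)), Units.isUnit _, Or.inl ?_⟩
    rw [← Units.val_pow_eq_pow_val, ← zpow_natCast, ← _root_.zpow_mul, mul_comm]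
    rfl
  · refine ⟨((g ^ m : (ZMod (p ^ k))ˣ) : ZMod (p ^ k)), Units.isUnit _, Or.inr ?_⟩
    rw [← Units.val_pow_eq_pow_val, ← zpow_natCast, ← _root_.zpow_mul, ← Units.val_mul, mul_comm m,
      add_comm, ← _root_.zpow_one_add]
    rfl

lemma sum_units_eq_sum_filter {R : Type*} [CommRing R] [Fintype R] [DecidableEq R]
    [DecidablePred (IsUnit : R → Prop)] (f : R → ℂ) :
    ∑ t : Rˣ, f t = ∑ t : R with IsUnit t, f t := by
  refine Finset.sum_bij (fun t _ => (t : R)) ?_ ?_ ?_ ?_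
  · simp
  · intro a _ b _ h
    exact Units.ext h
  · intro b hb
    obtain ⟨u, rfl⟩ := (Finset.mem_filter.mp hb).2
    exact ⟨u, Finset.mem_univ _, rfl⟩
  · simp

lemma sum_units_mul_stdAddChar_eq_zero {f : ZMod (p ^ k) → ℂ}
    (hf : ∀ t, IsUnit t → ∀ j, f (t + p * j) = f t) {n : ZMod (p ^ k)}
    (hn : (p : ZMod (p ^ k)) * n ≠ 0) :
    ∑ t : (ZMod (p ^ k))ˣ, f t * ZMod.stdAddChar ((t : ZMod (p ^ k)) * n) = 0 := by
  classical
  obtain ⟨j, hj⟩ := exists_stdAddChar_mul_ne_one hn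
  rw [sum_units_eq_sum_filter (fun t => f t * ZMod.stdAddChar (t * n))]
  set S := ∑ t : ZMod (p ^ k) with IsUnit t, f t * (ZMod.stdAddChar (t * n) : ℂ)
  have key : (ZMod.stdAddChar ((p : ZMod (p ^ k)) * n * j) : ℂ) * S = S := by
    rw [Finset.mul_sum]
    refine Finset.sum_nbij' (fun t => t + p * j) (fun t => t + p * (-j)) ?_ ?_ ?_ ?_ ?_
    · intro t ht
      simpa using (Finset.mem_filter.mp ht).2.add_prime_mul j
    · intro t ht
      have := (Finset.mem_filter.mp ht).2.add_prime_mul (-j)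
      simpa only [Finset.mem_filter, Finset.mem_univ, true_and] using this
    · intro t _
      ring
    · intro t _
      ring
    · intro t ht
      rw [hf t (Finset.mem_filter.mp ht).2, mul_left_comm, ← AddChar.map_add_eq_mul]
      congr 2
      ring
  have : ((ZMod.stdAddChar ((p : ZMod (p ^ k)) * n * j) : ℂ) - 1) * S = 0 := by
    rw [sub_mul, key, one_mul, sub_self]
  exact (mul_eq_zero.mp this).resolve_left (sub_ne_zero.mpr hj)

lemma sum_units_stdAddChar_eq_neg (hk : k ≠ 0) {n : ZMod (p ^ k)} (hn : n ≠ 0)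
    (hpn : (p : ZMod (p ^ k)) * n = 0) :
    ∑ t : (ZMod (p ^ k))ˣ, (ZMod.stdAddChar ((t : ZMod (p ^ k)) * n) : ℂ) = -(p : ℂ) ^ (k - 1) := by
  classical
  have hp : p.Prime := Fact.out
  have htot : ∑ t : ZMod (p ^ k), (ZMod.stdAddChar (t * n) : ℂ) = 0 := by
    rw [AddChar.sum_mulShift n (ZMod.isPrimitive_stdAddChar _), if_neg hn, Nat.cast_zero]
  have hcard : ((Finset.univ.filter fun t : ZMod (p ^ k) => IsUnit t).card : ℂ)
      = p ^ (k - 1) * (p - 1) := by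
    have h := sum_units_eq_sum_filter (R := ZMod (p ^ k)) (fun _ => 1)
    rw [Finset.sum_const, Finset.sum_const, Finset.card_univ, ZMod.card_units_eq_totient,
      Nat.totient_prime_pow hp (Nat.pos_of_ne_zero hk)] at h
    have h1 : ((p - 1 : ℕ) : ℂ) = p - 1 := by rw [Nat.cast_sub hp.one_le, Nat.cast_one]
    rw [← h1]
    simpa using h.symm
  have hsum : ((Finset.univ.filter fun t : ZMod (p ^ k) => IsUnit t).card : ℂ)
      + (Finset.univ.filter fun t : ZMod (p ^ k) => ¬ IsUnit t).card = p ^ k := by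
    have := Finset.card_filter_add_card_filter_not (s := (Finset.univ : Finset (ZMod (p ^ k))))
      (fun t => IsUnit t)
    rw [Finset.card_univ, ZMod.card] at this
    exact_mod_cast this
  have hnon : ∑ t : ZMod (p ^ k) with ¬ IsUnit t, (ZMod.stdAddChar (t * n) : ℂ)
      = (Finset.univ.filter fun t : ZMod (p ^ k) => ¬ IsUnit t).card := by
    rw [Finset.card_eq_sum_ones, Nat.cast_sum]
    refine Finset.sum_congr rfl fun t ht => ?_
    obtain ⟨y, rfl⟩ := (isUnit_or_exists_eq_prime_mul t).resolve_left (Finset.mem_filter.mp ht).2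
    rw [show (p : ZMod (p ^ k)) * y * n = 0 by linear_combination y * hpn]
    simp
  rw [sum_units_eq_sum_filter (fun t => (ZMod.stdAddChar (t * n) : ℂ))]
  rw [← Finset.sum_filter_add_sum_filter_not _ (fun t => IsUnit t), hnon] at htot
  obtain ⟨m, rfl⟩ := Nat.exists_eq_succ_of_ne_zero hk
  simp only [Nat.succ_eq_add_one, Nat.add_sub_cancel] at *
  linear_combination htot - hsum + hcard

lemma exists_int_eq_sum_units_stdAddChar (hk : k ≠ 0) (n : ZMod (p ^ k)) :
    ∃ z : ℤ, ∑ t : (ZMod (p ^ k))ˣ, (ZMod.stdAddChar ((t : ZMod (p ^ k)) * n) : ℂ) = z := by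
  by_cases hpn : (p : ZMod (p ^ k)) * n = 0
  · by_cases hn : n = 0
    · exact ⟨Fintype.card (ZMod (p ^ k))ˣ, by simp [hn]⟩
    · exact ⟨-(p : ℤ) ^ (k - 1), by rw [sum_units_stdAddChar_eq_neg hk hn hpn]; push_cast; rfl⟩
  · refine ⟨0, ?_⟩
    simpa using sum_units_mul_stdAddChar_eq_zero (f := fun _ => 1) (fun _ _ _ => rfl) hpn

lemma sum_norm_sq_sum_units {q : ℕ} [NeZero q] (f : ZMod q → ℂ) :
    ∑ n : ZMod q, ‖∑ t : (ZMod q)ˣ, f t * ZMod.stdAddChar ((t : ZMod q) * n)‖ ^ 2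
      = q * ∑ t : (ZMod q)ˣ, ‖f t‖ ^ 2 := by
  classical
  have : ((∑ n : ZMod q, ‖∑ t : (ZMod q)ˣ, f t * ZMod.stdAddChar ((t : ZMod q) * n)‖ ^ 2 : ℝ) : ℂ)
      = ((q * ∑ t : (ZMod q)ˣ, ‖f t‖ ^ 2 : ℝ) : ℂ) := by
    push_cast
    simp only [← Complex.mul_conj', map_sum, map_mul, ← AddChar.map_neg_eq_conj,
      Finset.sum_mul_sum]
    rw [Finset.sum_comm, Finset.mul_sum]
    refine Finset.sum_congr rfl fun t _ => ?_
    rw [Finset.sum_comm]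
    have : ∀ t' : (ZMod q)ˣ, ∑ n : ZMod q, f t * (ZMod.stdAddChar ((t : ZMod q) * n) : ℂ) *
        ((starRingEnd ℂ) (f t') * ZMod.stdAddChar (-((t' : ZMod q) * n)))
        = if t = t' then q * (f t * (starRingEnd ℂ) (f t)) else 0 := by
      intro t'
      calc _ = ∑ n : ZMod q, (f t * (starRingEnd ℂ) (f t')) *
              (ZMod.stdAddChar (n * ((t : ZMod q) - (t' : ZMod q))) : ℂ) := by
            refine Finset.sum_congr rfl fun n _ => ?_
            rw [show n * ((t : ZMod q) - (t' : ZMod q)) = t * n + -(t' * n) by ring,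
              AddChar.map_add_eq_mul]
            ring
        _ = _ := by
            rw [← Finset.mul_sum, AddChar.sum_mulShift _ (ZMod.isPrimitive_stdAddChar _)]
            simp only [sub_eq_zero, Units.val_inj, ZMod.card]
            split_ifs with h
            · rw [h]; ring
            · simp
    simp only [this, Finset.sum_ite_eq, Finset.mem_univ, if_true]
  exact_mod_cast this

variable {V : Type*} [AddCommGroup V] [Module (ZMod (p ^ k)) V] [Fintype V]

lemma quadGaussSum_add_prime_mul (hp2 : p ≠ 2) (hk : k ≠ 0) (Q : QuadraticForm (ZMod (p ^ k)) V)
    (t : ZMod (p ^ k)) (ht : IsUnit t) (j : ZMod (p ^ k)) :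
    quadGaussSum Q (t + p * j) = quadGaussSum Q t := by
  obtain ⟨t', ht'⟩ := ht.exists_right_inv
  obtain ⟨r, hr, hr2⟩ := exists_isUnit_one_add_prime_mul_eq_sq hp2 hk (t' * j)
  rw [← quadGaussSum_mul_sq Q t hr, ← hr2]
  congr 1
  linear_combination (-(p : ZMod (p ^ k)) * j) * ht'

lemma quadGaussSum_sq_eq (hp2 : p ≠ 2) (hk : k ≠ 0) (Q : QuadraticForm (ZMod (p ^ k)) V)
    {t : ZMod (p ^ k)} (ht : IsUnit t) : quadGaussSum Q t ^ 2 = quadGaussSum Q 1 ^ 2 := by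
  obtain ⟨a, b, r, hr, h⟩ := exists_sq_add_sq_eq_mul_sq hp2 hk ht
  rw [← quadGaussSum_mul_sq Q t hr, ← h]
  exact quadGaussSum_add_sq_sq Q (h ▸ ht.mul (hr.pow 2))

lemma isSquare_card_of_quadGaussSum_eq (hk : k ≠ 0) {Q : QuadraticForm (ZMod (p ^ k)) V}
    (hQ : Q.polarBilin.SeparatingLeft)
    (h : ∀ t : (ZMod (p ^ k))ˣ, quadGaussSum Q t = quadGaussSum Q 1) :
    IsSquare (Fintype.card V) := by
  choose z hz using exists_int_eq_sum_units_stdAddChar (p := p) hk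
  have h1 : (Fintype.card (ZMod (p ^ k))ˣ : ℂ) * quadGaussSum Q 1
      = ((∑ x : V, z (Q x) : ℤ) : ℂ) := by
    calc _ = ∑ t : (ZMod (p ^ k))ˣ, quadGaussSum Q t := by
          simp [h]
      _ = _ := by
          simp only [quadGaussSum]
          rw [Finset.sum_comm]
          simp [hz]
  set w := ∑ x : V, z (Q x)
  set c := Fintype.card (ZMod (p ^ k))ˣ
  have hc : c ≠ 0 := Fintype.card_ne_zero
  have h2 : ((c ^ 2 * Fintype.card V : ℕ) : ℝ) = ((w.natAbs ^ 2 : ℕ) : ℝ) := by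
    have h3 := congrArg (fun x : ℂ => ‖x‖ ^ 2) h1
    simp only [norm_mul, mul_pow, norm_quadGaussSum_sq hQ isUnit_one, Complex.norm_natCast,
      Complex.norm_intCast, sq_abs] at h3
    push_cast
    rw [h3, Nat.cast_natAbs, Int.cast_abs, sq_abs]
  have h3 : c ^ 2 * Fintype.card V = w.natAbs ^ 2 := by exact_mod_cast h2
  obtain ⟨d, hd⟩ : c ∣ w.natAbs := (Nat.pow_dvd_pow_iff two_ne_zero).mp ⟨_, h3.symm⟩
  refine ⟨d, ?_⟩
  rw [hd, mul_pow] at h3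
  rw [← sq]
  exact Nat.eq_of_mul_eq_mul_left (by positivity) h3

lemma quadGaussSum_mul_eq_neg (hp2 : p ≠ 2) (hk : k ≠ 0) {Q : QuadraticForm (ZMod (p ^ k)) V}
    (hQ : Q.polarBilin.SeparatingLeft) (hV : ¬ IsSquare (Fintype.card V)) {v : ZMod (p ^ k)}
    (hv : IsUnit v) (hv2 : ∀ t, IsUnit t → ∃ r, IsUnit r ∧ (t = r ^ 2 ∨ t = v * r ^ 2))
    {t : ZMod (p ^ k)} (ht : IsUnit t) : quadGaussSum Q (v * t) = -quadGaussSum Q t := by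
  have hsq : ∀ r, IsUnit r → quadGaussSum Q (r ^ 2) = quadGaussSum Q 1 := fun r hr => by
    rw [← quadGaussSum_mul_sq Q 1 hr, one_mul]
  have hneg : quadGaussSum Q v = -quadGaussSum Q 1 := by
    refine (sq_eq_sq_iff_eq_or_eq_neg.mp (quadGaussSum_sq_eq hp2 hk Q hv)).resolve_left fun h => ?_
    refine hV (isSquare_card_of_quadGaussSum_eq hk hQ fun t => ?_)
    obtain ⟨r, hr, h' | h'⟩ := hv2 t t.isUnit
    · rw [h', hsq r hr]
    · rw [h', quadGaussSum_mul_sq Q v hr, h]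
  obtain ⟨r, hr, rfl | rfl⟩ := hv2 t ht
  · rw [quadGaussSum_mul_sq Q v hr, hsq r hr, hneg]
  · rw [quadGaussSum_mul_sq Q v hr, hneg, neg_neg, show v * (v * r ^ 2) = (v * r) ^ 2 by ring,
      hsq _ (hv.mul hr)]

lemma separatingLeft_polarBilin_sq (hp2 : p ≠ 2) :
    (QuadraticMap.sq : QuadraticForm (ZMod (p ^ k)) (ZMod (p ^ k))).polarBilin.SeparatingLeft := by
  intro x hx
  have hp : p.Prime := Fact.out
  have h2 : IsUnit ((2 : ℕ) : ZMod (p ^ k)) := by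
    rw [ZMod.isUnit_iff_coprime]
    exact Nat.Coprime.pow_right _ ((Nat.coprime_primes Nat.prime_two hp).mpr hp2.symm)
  have h := hx 1
  rw [polarBilin_apply_apply, polar] at h
  simp only [QuadraticMap.sq_apply] at h
  refine h2.mul_right_eq_zero.mp ?_
  push_cast
  linear_combination h

lemma not_isSquare_prime_pow {p n : ℕ} (hp : p.Prime) (hn : Odd n) : ¬ IsSquare (p ^ n) := by
  have := Fact.mk hp
  rintro ⟨b, hb⟩
  have hb0 : b ≠ 0 := by
    rintro rfl
    exact pow_ne_zero n hp.ne_zero hb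
  have h := congrArg (padicValNat p) hb
  rw [padicValNat.prime_pow, padicValNat.mul hb0 hb0] at h
  exact Nat.not_odd_iff_even.mpr ⟨_, h⟩ hn

lemma quadGaussSum_eq_quadGaussSum_one (hp2 : p ≠ 2) (hk : Odd k)
    {Q : QuadraticForm (ZMod (p ^ k)) V} (hQ : Q.polarBilin.SeparatingLeft)
    (hV : IsSquare (Fintype.card V)) {t : ZMod (p ^ k)} (ht : IsUnit t) :
    quadGaussSum Q t = quadGaussSum Q 1 := by
  have hk0 : k ≠ 0 := hk.pos.ne'
  have hp : p.Prime := Fact.out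
  have hns := not_isSquare_prime_pow hp hk
  obtain ⟨v, hv, hv2⟩ := exists_isUnit_forall_eq_sq_or (p := p) (k := k) hp2
  have h1 := quadGaussSum_mul_eq_neg hp2 hk0 (separatingLeft_polarBilin_sq hp2)
    (by rwa [ZMod.card]) hv hv2 isUnit_one
  have h2 := quadGaussSum_mul_eq_neg hp2 hk0
    (separatingLeft_polarBilin_prod hQ (separatingLeft_polarBilin_sq hp2))
    (by
      rw [Fintype.card_prod, ZMod.card]
      rintro ⟨b, hb⟩
      obtain ⟨a, ha⟩ := hV
      rw [ha, ← sq, ← sq] at hb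
      have ha0 : a ≠ 0 := by
        rintro rfl
        exact Fintype.card_ne_zero ha
      obtain ⟨d, rfl⟩ : a ∣ b := (Nat.pow_dvd_pow_iff two_ne_zero).mp ⟨_, hb.symm⟩
      rw [mul_pow] at hb
      exact hns ⟨d, by rw [← sq]; exact Nat.eq_of_mul_eq_mul_left (by positivity) hb⟩)
    hv hv2 isUnit_one
  rw [quadGaussSum_prod, quadGaussSum_prod, h1, mul_neg, neg_inj] at h2
  have hv1 : quadGaussSum Q v = quadGaussSum Q 1 := by
    simpa using mul_right_cancel₀
      (quadGaussSum_ne_zero (separatingLeft_polarBilin_sq hp2) isUnit_one) h2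
  obtain ⟨r, hr, rfl | rfl⟩ := hv2 t ht
  · rw [← quadGaussSum_mul_sq Q 1 hr, one_mul]
  · rw [quadGaussSum_mul_sq Q v hr, hv1]

lemma pow_sub_one_le_gcd (hk : k ≠ 0) {F : ℤ}
    (h : (p : ZMod (p ^ k)) * (F : ZMod (p ^ k)) = 0) :
    p ^ (k - 1) ≤ Int.gcd F ((p : ℤ) ^ k) := by
  have hp : p.Prime := Fact.out
  obtain ⟨m, rfl⟩ := Nat.exists_eq_succ_of_ne_zero hk
  have h1 : ((p * F : ℤ) : ZMod (p ^ (m + 1))) = 0 := by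
    push_cast
    exact h
  rw [ZMod.intCast_zmod_eq_zero_iff_dvd, Nat.cast_pow, pow_succ'] at h1
  have h2 : (p : ℤ) ^ m ∣ F := Int.dvd_of_mul_dvd_mul_left (Nat.cast_ne_zero.mpr hp.ne_zero) h1
  refine Nat.le_of_dvd (Int.gcd_pos_of_ne_zero_right _ (pow_ne_zero _ (by
    simpa using hp.ne_zero))) ?_
  refine Int.natCast_dvd_natCast.mp (Int.dvd_coe_gcd ?_ ?_)
  · simpa using h2
  · simpa using pow_dvd_pow (p : ℤ) (Nat.le_succ m)

omit [Fact p.Prime] in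
lemma gcd_eq_pow_of_intCast_eq_zero {F : ℤ} (h : (F : ZMod (p ^ k)) = 0) :
    Int.gcd F ((p : ℤ) ^ k) = p ^ k := by
  rw [ZMod.intCast_zmod_eq_zero_iff_dvd, Nat.cast_pow] at h
  rw [Int.gcd_def, Nat.gcd_eq_right (Int.natAbs_dvd_natAbs.mpr h)]
  simp [Int.natAbs_pow]

lemma norm_sum_units_mul_stdAddChar_le (hk : k ≠ 0) {f : ZMod (p ^ k) → ℂ}
    (hf : ∀ t, IsUnit t → f t = f 1) {F : ℤ} {a : ZMod (p ^ k)} (ha : IsUnit a) :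
    ‖∑ t : (ZMod (p ^ k))ˣ, f t * ZMod.stdAddChar ((t : ZMod (p ^ k)) * (a * (F : ZMod (p ^ k))))‖
      ≤ ‖f 1‖ * Int.gcd F ((p : ℤ) ^ k) := by
  by_cases hpn : (p : ZMod (p ^ k)) * (F : ZMod (p ^ k)) = 0
  · have h : ∑ t : (ZMod (p ^ k))ˣ,
        f t * (ZMod.stdAddChar ((t : ZMod (p ^ k)) * (a * (F : ZMod (p ^ k)))) : ℂ)
        = f 1 * ∑ t : (ZMod (p ^ k))ˣ,
          (ZMod.stdAddChar ((t : ZMod (p ^ k)) * (a * (F : ZMod (p ^ k)))) : ℂ) := by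
      rw [Finset.mul_sum]
      exact Finset.sum_congr rfl fun t _ => by rw [hf t t.isUnit]
    rw [h, norm_mul]
    refine mul_le_mul_of_nonneg_left ?_ (norm_nonneg _)
    by_cases hF : (F : ZMod (p ^ k)) = 0
    · rw [gcd_eq_pow_of_intCast_eq_zero hF, hF]
      simp only [mul_zero, AddChar.map_zero_eq_one, Finset.sum_const, Finset.card_univ,
        nsmul_eq_mul, mul_one, Complex.norm_natCast, Nat.cast_le, ZMod.card_units_eq_totient]
      exact Nat.totient_le _
    · rw [sum_units_stdAddChar_eq_neg hk (by rwa [Ne, ha.mul_right_eq_zero])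
        (by linear_combination a * hpn), norm_neg, norm_pow, Complex.norm_natCast]
      exact_mod_cast pow_sub_one_le_gcd hk hpn
  · rw [sum_units_mul_stdAddChar_eq_zero, norm_zero]
    · positivity
    · intro t ht j
      rw [hf _ (ht.add_prime_mul j), hf t ht]
    · rwa [mul_left_comm, Ne, ha.mul_right_eq_zero]

lemma sum_units_quadGaussSum_eq_zero (hp2 : p ≠ 2) (hk : k ≠ 0)
    {Q : QuadraticForm (ZMod (p ^ k)) V} (hQ : Q.polarBilin.SeparatingLeft)
    (hV : ¬ IsSquare (Fintype.card V)) : ∑ t : (ZMod (p ^ k))ˣ, quadGaussSum Q t = 0 := by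
  obtain ⟨v, hv, hv2⟩ := exists_isUnit_forall_eq_sq_or (p := p) (k := k) hp2
  obtain ⟨v, rfl⟩ := hv
  have h : ∑ t : (ZMod (p ^ k))ˣ, quadGaussSum Q t = -∑ t : (ZMod (p ^ k))ˣ, quadGaussSum Q t := by
    conv_lhs =>
      rw [← Equiv.sum_comp (Equiv.mulLeft v)
        (fun t : (ZMod (p ^ k))ˣ => quadGaussSum Q (t : ZMod (p ^ k)))]
    rw [← Finset.sum_neg_distrib]
    refine Finset.sum_congr rfl fun t _ => ?_
    exact quadGaussSum_mul_eq_neg hp2 hk hQ hV v.isUnit hv2 t.isUnit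
  exact self_eq_neg.mp h

lemma norm_sum_units_quadGaussSum_mul_unit (hp2 : p ≠ 2) (hk : k ≠ 0)
    {Q : QuadraticForm (ZMod (p ^ k)) V} (hQ : Q.polarBilin.SeparatingLeft)
    (hV : ¬ IsSquare (Fintype.card V)) {u : ZMod (p ^ k)} (hu : IsUnit u) (n : ZMod (p ^ k)) :
    ‖∑ t : (ZMod (p ^ k))ˣ, quadGaussSum Q t * ZMod.stdAddChar ((t : ZMod (p ^ k)) * (u * n))‖
      = ‖∑ t : (ZMod (p ^ k))ˣ, quadGaussSum Q t * ZMod.stdAddChar ((t : ZMod (p ^ k)) * n)‖ := by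
  obtain ⟨v, hv, hv2⟩ := exists_isUnit_forall_eq_sq_or (p := p) (k := k) hp2
  obtain ⟨r, hr, h⟩ := hv2 u hu
  obtain ⟨u, rfl⟩ := hu
  conv_rhs =>
    rw [← Equiv.sum_comp (Equiv.mulRight u) (fun t : (ZMod (p ^ k))ˣ =>
      quadGaussSum Q (t : ZMod (p ^ k)) * (ZMod.stdAddChar ((t : ZMod (p ^ k)) * n) : ℂ))]
  simp only [Equiv.coe_mulRight, Units.val_mul, mul_assoc]
  rcases h with h | h
  · congr 1
    refine Finset.sum_congr rfl fun t _ => ?_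
    rw [h, quadGaussSum_mul_sq Q _ hr]
  · rw [← norm_neg, ← Finset.sum_neg_distrib]
    congr 1
    refine Finset.sum_congr rfl fun t _ => ?_
    rw [h, show (t : ZMod (p ^ k)) * (v * r ^ 2) = v * t * r ^ 2 by ring,
      quadGaussSum_mul_sq Q _ hr, quadGaussSum_mul_eq_neg hp2 hk hQ hV hv hv2 t.isUnit, neg_mul]

lemma norm_sq_sum_units_quadGaussSum_le (hp2 : p ≠ 2) (hk : k ≠ 0)
    {Q : QuadraticForm (ZMod (p ^ k)) V} (hQ : Q.polarBilin.SeparatingLeft)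
    (hV : ¬ IsSquare (Fintype.card V)) {n : ZMod (p ^ k)} (hn : n ≠ 0) :
    ‖∑ t : (ZMod (p ^ k))ˣ, quadGaussSum Q t * ZMod.stdAddChar ((t : ZMod (p ^ k)) * n)‖ ^ 2
      ≤ Fintype.card V * (p ^ k * p ^ (k - 1)) := by
  classical
  have hp : p.Prime := Fact.out
  set T : ZMod (p ^ k) → ℝ := fun n =>
    ‖∑ t : (ZMod (p ^ k))ˣ, quadGaussSum Q t * ZMod.stdAddChar ((t : ZMod (p ^ k)) * n)‖ ^ 2 with hT
  have hunit : ∀ j : ℕ, 0 < j → j < p → IsUnit (j : ZMod (p ^ k)) := fun j h0 h1 => by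
    rw [ZMod.isUnit_iff_coprime]
    exact Nat.Coprime.pow_right _ (Nat.coprime_of_lt_prime h0.ne' h1 hp).symm
  have hinj : Set.InjOn (fun j : ℕ => (j : ZMod (p ^ k)) * n) (Finset.Ico 1 p) := by
    have aux : ∀ i j : ℕ, i < j → j < p → (i : ZMod (p ^ k)) * n ≠ j * n := by
      intro i j hij hj h
      refine hn ((hunit (j - i) (by lia) (by lia)).mul_right_eq_zero.mp ?_)
      rw [Nat.cast_sub hij.le, sub_mul, h, sub_self]
    intro i hi j hj hij
    simp only [Finset.coe_Ico, Set.mem_Ico] at hi hj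
    rcases lt_trichotomy i j with h | h | h
    · exact absurd hij (aux i j h hj.2)
    · exact h
    · exact absurd hij.symm (aux j i h hi.2)
  have hle : ((p - 1 : ℕ) : ℝ) * T n ≤ ∑ m : ZMod (p ^ k), T m := by
    calc ((p - 1 : ℕ) : ℝ) * T n = ∑ j ∈ Finset.Ico 1 p, T ((j : ZMod (p ^ k)) * n) := by
          rw [← Nat.card_Ico 1 p, ← nsmul_eq_mul, ← Finset.sum_const]
          refine Finset.sum_congr rfl fun j hj => ?_
          rw [Finset.mem_Ico] at hj
          simp only [hT]
          rw [norm_sum_units_quadGaussSum_mul_unit hp2 hk hQ hV (hunit j hj.1 hj.2)]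
      _ = ∑ m ∈ (Finset.Ico 1 p).image (fun j : ℕ => (j : ZMod (p ^ k)) * n), T m :=
          (Finset.sum_image hinj).symm
      _ ≤ _ := Finset.sum_le_sum_of_subset_of_nonneg (Finset.subset_univ _)
          fun _ _ _ => sq_nonneg _
  have hsum : ∑ m : ZMod (p ^ k), T m
      = ((p - 1 : ℕ) : ℝ) * (Fintype.card V * (p ^ k * p ^ (k - 1))) := by
    simp only [hT]
    rw [sum_norm_sq_sum_units, Finset.sum_congr rfl
      fun (t : (ZMod (p ^ k))ˣ) _ => norm_quadGaussSum_sq hQ t.isUnit, Finset.sum_const,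
      Finset.card_univ, ZMod.card_units_eq_totient,
      Nat.totient_prime_pow hp (Nat.pos_of_ne_zero hk), nsmul_eq_mul]
    push_cast
    ring
  rw [hsum] at hle
  exact le_of_mul_le_mul_left hle (Nat.cast_pos.mpr (Nat.sub_pos_of_lt hp.one_lt))

lemma norm_sq_sum_units_quadGaussSum_le_gcd (hp2 : p ≠ 2) (hk : k ≠ 0)
    {Q : QuadraticForm (ZMod (p ^ k)) V} (hQ : Q.polarBilin.SeparatingLeft)
    (hV : ¬ IsSquare (Fintype.card V)) {F : ℤ} {a : ZMod (p ^ k)} (ha : IsUnit a) :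
    ‖∑ t : (ZMod (p ^ k))ˣ,
        quadGaussSum Q t * ZMod.stdAddChar ((t : ZMod (p ^ k)) * (a * (F : ZMod (p ^ k))))‖ ^ 2
      ≤ Fintype.card V * (p ^ k * Int.gcd F ((p : ℤ) ^ k)) := by
  by_cases hpn : (p : ZMod (p ^ k)) * (F : ZMod (p ^ k)) = 0
  · by_cases hF : (F : ZMod (p ^ k)) = 0
    · simp only [hF, mul_zero, AddChar.map_zero_eq_one, mul_one]
      rw [sum_units_quadGaussSum_eq_zero hp2 hk hQ hV, norm_zero, zero_pow two_ne_zero]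
      positivity
    · refine (norm_sq_sum_units_quadGaussSum_le hp2 hk hQ hV
        (by rwa [Ne, ha.mul_right_eq_zero])).trans ?_
      have : ((p ^ (k - 1) : ℕ) : ℝ) ≤ Int.gcd F ((p : ℤ) ^ k) :=
        Nat.cast_le.mpr (pow_sub_one_le_gcd hk hpn)
      push_cast at this
      gcongr
  · rw [sum_units_mul_stdAddChar_eq_zero (quadGaussSum_add_prime_mul hp2 hk Q)
      (by rwa [mul_left_comm, Ne, ha.mul_right_eq_zero]), norm_zero, zero_pow two_ne_zero]
    positivity

end PrimePower

section Reduction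

variable {s q : ℕ} [NeZero q]

lemma eqc_eq_stdAddChar (n : ℤ) : eqc q n = ZMod.stdAddChar (n : ZMod q) := by
  rw [ZMod.stdAddChar_coe, eqc, e2pi]
  congr 1
  push_cast
  ring

omit [NeZero q] in
lemma gcd_gcd_eq_one_iff (a b : ℕ) :
    Nat.gcd (Nat.gcd a b) q = 1 ↔ ∃ x y : ZMod q, x * a + y * b = 1 := by
  constructor
  · intro h
    have h1 := Nat.gcd_eq_gcd_ab (Nat.gcd a b) q
    rw [h, Nat.gcd_eq_gcd_ab a b] at h1
    have h2 := congrArg (Int.cast : ℤ → ZMod q) h1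
    push_cast at h2
    rw [ZMod.natCast_self] at h2
    exact ⟨Nat.gcdA a b * Nat.gcdA (Nat.gcd a b) q, Nat.gcdB a b * Nat.gcdA (Nat.gcd a b) q,
      by linear_combination -h2⟩
  · rintro ⟨x, y, h⟩
    obtain ⟨x, rfl⟩ := ZMod.intCast_surjective x
    obtain ⟨y, rfl⟩ := ZMod.intCast_surjective y
    have h1 : ((x * a + y * b - 1 : ℤ) : ZMod q) = 0 := by
      push_cast
      rw [h, sub_self]
    rw [ZMod.intCast_zmod_eq_zero_iff_dvd] at h1
    have ha : ((Nat.gcd (Nat.gcd a b) q : ℕ) : ℤ) ∣ a :=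
      Int.natCast_dvd_natCast.mpr ((Nat.gcd_dvd_left _ _).trans (Nat.gcd_dvd_left _ _))
    have hb : ((Nat.gcd (Nat.gcd a b) q : ℕ) : ℤ) ∣ b :=
      Int.natCast_dvd_natCast.mpr ((Nat.gcd_dvd_left _ _).trans (Nat.gcd_dvd_right _ _))
    have hq : ((Nat.gcd (Nat.gcd a b) q : ℕ) : ℤ) ∣ q :=
      Int.natCast_dvd_natCast.mpr (Nat.gcd_dvd_right _ _)
    have h2 := dvd_sub (dvd_add (ha.mul_left x) (hb.mul_left y)) (hq.trans h1)
    rw [sub_sub_cancel] at h2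
    exact Nat.dvd_one.mp (Int.natCast_dvd_natCast.mp (by simpa using h2))

lemma sum_piFinset_range_eq (f : (Fin s → ZMod q) → ℂ) :
    ∑ b ∈ Fintype.piFinset (fun _ : Fin s => Finset.range q), f (fun i => (b i : ZMod q))
      = ∑ x : Fin s → ZMod q, f x := by
  refine Finset.sum_nbij' (fun b i => (b i : ZMod q)) (fun x i => (x i).val) ?_ ?_ ?_ ?_ ?_
  · simp
  · intro x _
    simp [Fintype.mem_piFinset, ZMod.val_lt]
  · intro b hb
    ext i
    simp only [Fintype.mem_piFinset, Finset.mem_range] at hb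
    exact ZMod.val_cast_of_lt (hb i)
  · intro x _
    ext i
    simp
  · simp

lemma sum_residues_dvd_eq {c : ℤ × ℤ} (hc : Int.gcd c.1 c.2 = 1) (f : ZMod q → ZMod q → ℂ) :
    ∑ a ∈ (residues q).filter
        (fun a => (q : ℤ) ∣ ((1 : ℕ) : ℤ) * (c.1 * (a.2 : ℤ) - c.2 * (a.1 : ℤ))), f a.1 a.2
      = ∑ t : (ZMod q)ˣ, f (t * (c.1 : ZMod q)) (t * (c.2 : ZMod q)) := by
  obtain ⟨x, y, hxy⟩ : ∃ x y : ZMod q, (c.1 : ZMod q) * x + (c.2 : ZMod q) * y = 1 := by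
    have h := congrArg (Int.cast : ℤ → ZMod q) (Int.gcd_eq_gcd_ab c.1 c.2)
    rw [hc] at h
    push_cast at h
    exact ⟨_, _, h.symm⟩
  symm
  refine Finset.sum_bij (fun (t : (ZMod q)ˣ) _ =>
    ((t * (c.1 : ZMod q) : ZMod q).val, (t * (c.2 : ZMod q) : ZMod q).val)) ?_ ?_ ?_ ?_
  · intro t _
    simp only [Finset.mem_filter, residues, Finset.mem_product, Finset.mem_range, ZMod.val_lt,
      gcd_gcd_eq_one_iff, ZMod.natCast_zmod_val, true_and]
    refine ⟨⟨x * (t⁻¹ : (ZMod q)ˣ), y * (t⁻¹ : (ZMod q)ˣ), ?_⟩, ?_⟩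
    · linear_combination hxy + (x * (c.1 : ZMod q) + y * (c.2 : ZMod q)) * t.inv_mul
    · rw [← ZMod.intCast_zmod_eq_zero_iff_dvd]
      push_cast
      rw [ZMod.natCast_zmod_val, ZMod.natCast_zmod_val]
      ring
  · intro t _ t' _ h
    rw [Prod.mk.injEq, (ZMod.val_injective q).eq_iff, (ZMod.val_injective q).eq_iff] at h
    refine Units.ext ?_
    linear_combination x * h.1 + y * h.2 - ((t : ZMod q) - (t' : ZMod q)) * hxy
  · intro a ha
    simp only [Finset.mem_filter, residues, Finset.mem_product, Finset.mem_range,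
      gcd_gcd_eq_one_iff, ← ZMod.intCast_zmod_eq_zero_iff_dvd] at ha
    obtain ⟨⟨⟨h1, h2⟩, z, w, hzw⟩, h⟩ := ha
    push_cast at h
    have e1 : (x * a.1 + y * a.2) * (c.1 : ZMod q) = a.1 := by
      linear_combination (a.1 : ZMod q) * hxy + y * h
    have e2 : (x * a.1 + y * a.2) * (c.2 : ZMod q) = a.2 := by
      linear_combination (a.2 : ZMod q) * hxy - x * h
    have hu : (x * a.1 + y * a.2) * (z * (c.1 : ZMod q) + w * (c.2 : ZMod q)) = 1 := by
      linear_combination z * e1 + w * e2 + hzw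
    refine ⟨Units.mkOfMulEqOne _ _ hu, Finset.mem_univ _, ?_⟩
    ext
    · simp only [Units.val_mkOfMulEqOne]
      rw [e1, ZMod.val_cast_of_lt h1]
    · simp only [Units.val_mkOfMulEqOne]
      rw [e2, ZMod.val_cast_of_lt h2]
  · intro t _
    simp

/-- The reduction modulo `q` of the quadratic form attached to an integer matrix. -/
noncomputable def zmodForm (q : ℕ) (M : Matrix (Fin s) (Fin s) ℤ) :
    QuadraticForm (ZMod q) (Fin s → ZMod q) :=
  (M.map (Int.cast : ℤ → ZMod q)).toQuadraticForm'

omit [NeZero q] in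
lemma zmodForm_apply (M : Matrix (Fin s) (Fin s) ℤ) (x : Fin s → ZMod q) :
    zmodForm q M x = x ⬝ᵥ (M.map (Int.cast : ℤ → ZMod q)) *ᵥ x := by
  rw [zmodForm, Matrix.toQuadraticForm', LinearMap.BilinMap.toQuadraticMap_apply,
    Matrix.toLinearMap₂'_apply']

omit [NeZero q] in
lemma zmodForm_eq_quadEval (M : Matrix (Fin s) (Fin s) ℤ) (x : Fin s → ZMod q) :
    zmodForm q M x = quadEval M x := by
  simp only [zmodForm_apply, quadEval, dotProduct, Matrix.mulVec, Finset.mul_sum, Matrix.map_apply]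
  refine Finset.sum_congr rfl fun i _ => Finset.sum_congr rfl fun j _ => ?_
  ring

omit [NeZero q] in
lemma polar_zmodForm {M : Matrix (Fin s) (Fin s) ℤ} (hM : M.IsSymm) (x y : Fin s → ZMod q) :
    polar (zmodForm q M) x y = 2 * (x ⬝ᵥ (M.map (Int.cast : ℤ → ZMod q)) *ᵥ y) := by
  have h : (M.map (Int.cast : ℤ → ZMod q))ᵀ = M.map Int.cast := by
    rw [← Matrix.transpose_map, hM.eq]
  rw [zmodForm, Matrix.toQuadraticForm', LinearMap.BilinMap.polar_toQuadraticMap,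
    Matrix.toLinearMap₂'_apply', Matrix.toLinearMap₂'_apply', Matrix.dotProduct_mulVec y,
    ← Matrix.mulVec_transpose, h, dotProduct_comm _ x, two_mul]

omit [NeZero q] in
lemma separatingLeft_polarBilin_zmodForm {M : Matrix (Fin s) (Fin s) ℤ} (hM : M.IsSymm)
    (hd : IsUnit (((2 * M.det : ℤ)) : ZMod q)) : (zmodForm q M).polarBilin.SeparatingLeft := by
  intro x hx
  have hdet : ((M.det : ℤ) : ZMod q) = (M.map (Int.cast : ℤ → ZMod q)).det :=
    (Int.castRingHom (ZMod q)).map_det M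
  rw [Int.cast_mul, Int.cast_ofNat, hdet] at hd
  set N := M.map (Int.cast : ℤ → ZMod q)
  have h : ∀ y, x ⬝ᵥ y = 0 := fun y => by
    have h1 := hx (N.adjugate *ᵥ y)
    rw [polarBilin_apply_apply, polar_zmodForm hM, Matrix.mulVec_mulVec, Matrix.mul_adjugate,
      Matrix.smul_mulVec, Matrix.one_mulVec, dotProduct_smul, smul_eq_mul, ← mul_assoc] at h1
    exact hd.mul_right_eq_zero.mp h1
  exact dotProduct_eq_zero _ h

omit [NeZero q] in
lemma quadEval_intCast (M : Matrix (Fin s) (Fin s) ℤ) (b : Fin s → ℤ) :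
    ((quadEval M b : ℤ) : ZMod q) = quadEval M (fun i => (b i : ZMod q)) := by
  simp [quadEval]

lemma Sq_one_eq_sum_units (M₁ M₂ : Matrix (Fin s) (Fin s) ℤ) {c : ℤ × ℤ}
    (hc : Int.gcd c.1 c.2 = 1) (u : Fin s → ℤ) :
    Sq s M₁ M₂ q 1 c u = ∑ t : (ZMod q)ˣ, ∑ x : Fin s → ZMod q,
      (ZMod.stdAddChar ((t : ZMod q) * zmodForm q (c.1 • M₁ + c.2 • M₂) x
        + x ⬝ᵥ fun i => (u i : ZMod q)) : ℂ) := by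
  have h := sum_residues_dvd_eq (q := q) hc fun a b => ∑ x : Fin s → ZMod q,
    (ZMod.stdAddChar (a * quadEval M₁ x + b * quadEval M₂ x + x ⬝ᵥ fun i => (u i : ZMod q)) : ℂ)
  rw [Sq]
  refine Eq.trans (Finset.sum_congr rfl fun a _ => ?_) (h.trans ?_)
  · rw [← sum_piFinset_range_eq]
    refine Finset.sum_congr rfl fun b _ => ?_
    rw [eqc_eq_stdAddChar]
    push_cast [quadEval_intCast]
    rfl
  · refine Finset.sum_congr rfl fun t _ => Finset.sum_congr rfl fun x _ => ?_
    congr 2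
    rw [zmodForm_eq_quadEval]
    simp only [quadEval, Finset.mul_sum, ← Finset.sum_add_distrib, Matrix.add_apply,
      Matrix.smul_apply, smul_eq_mul]
    refine Finset.sum_congr rfl fun i _ => Finset.sum_congr rfl fun j _ => ?_
    push_cast
    ring

lemma Sq_one_eq_sum_quadGaussSum (M₁ M₂ : Matrix (Fin s) (Fin s) ℤ) {c : ℤ × ℤ}
    (hc : Int.gcd c.1 c.2 = 1) (hM : (c.1 • M₁ + c.2 • M₂).IsSymm)
    (hd : IsUnit (((2 * (c.1 • M₁ + c.2 • M₂).det : ℤ)) : ZMod q)) (u : Fin s → ℤ) :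
    ∃ a : ZMod q, IsUnit a ∧ Sq s M₁ M₂ q 1 c u
      = ∑ t : (ZMod q)ˣ, quadGaussSum (zmodForm q (c.1 • M₁ + c.2 • M₂)) t *
        ZMod.stdAddChar ((t : ZMod q) *
          (a * ((u ⬝ᵥ ((c.1 • M₁ + c.2 • M₂).adjugate.mulVec u) : ℤ) : ZMod q))) := by
  rw [Sq_one_eq_sum_units M₁ M₂ hc]
  set M := c.1 • M₁ + c.2 • M₂
  set N := M.map (Int.cast : ℤ → ZMod q)
  set v : Fin s → ZMod q := fun i => (u i : ZMod q) with hv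
  have hdet : ((M.det : ℤ) : ZMod q) = N.det := (Int.castRingHom (ZMod q)).map_det M
  have hadj : M.adjugate.map (Int.cast : ℤ → ZMod q) = N.adjugate :=
    (Int.castRingHom (ZMod q)).map_adjugate M
  have hF : ((u ⬝ᵥ (M.adjugate.mulVec u) : ℤ) : ZMod q) = v ⬝ᵥ N.adjugate *ᵥ v := by
    rw [← hadj]
    simp [dotProduct, Matrix.mulVec, hv]
  rw [Int.cast_mul, Int.cast_ofNat, hdet] at hd
  obtain ⟨e, he⟩ := hd.exists_right_inv
  have hNw : N *ᵥ (e • N.adjugate *ᵥ v) = (e * N.det) • v := by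
    rw [Matrix.mulVec_smul, Matrix.mulVec_mulVec, Matrix.mul_adjugate, Matrix.smul_mulVec,
      Matrix.one_mulVec, smul_smul]
  refine ⟨-(e * e * N.det), ?_, ?_⟩
  · have : IsUnit e := IsUnit.of_mul_eq_one _ (by rw [mul_comm]; exact he)
    exact ((this.mul this).mul (isUnit_of_mul_isUnit_right hd)).neg
  · have hp : ∀ x, x ⬝ᵥ v = polar (zmodForm q M) x (e • N.adjugate *ᵥ v) := fun x => by
      rw [polar_zmodForm hM, hNw, dotProduct_smul, smul_eq_mul]
      linear_combination -(x ⬝ᵥ v) * he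
    have hQw : -zmodForm q M (e • N.adjugate *ᵥ v)
        = -(e * e * N.det) * (v ⬝ᵥ N.adjugate *ᵥ v) := by
      rw [zmodForm_apply, hNw, smul_dotProduct, dotProduct_smul, dotProduct_comm _ v, smul_eq_mul,
        smul_eq_mul]
      ring
    simp only [hp]
    rw [sum_units_quadGaussSum_shift, hQw, hF]

end Reduction

lemma isUnit_intCast_zmod_prime_pow {p k : ℕ} [Fact p.Prime] {n : ℤ} (hn : ¬ (p : ℤ) ∣ n) :
    IsUnit (n : ZMod (p ^ k)) := by
  rw [ZMod.coe_int_isUnit_iff_isCoprime, Nat.cast_pow]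
  exact (((Nat.prime_iff_prime_int.mp Fact.out).coprime_iff_not_dvd).mpr hn).pow_left

lemma exists_eq_prime_pow_mul {p m : ℕ} [Fact p.Prime] {x : ZMod (p ^ (m + m))}
    (hx : ((p ^ m : ℕ) : ZMod (p ^ (m + m))) * x = 0) :
    ∃ y, x = ((p ^ m : ℕ) : ZMod (p ^ (m + m))) * y := by
  obtain ⟨n, rfl⟩ := ZMod.natCast_zmod_surjective x
  rw [← Nat.cast_mul, ZMod.natCast_eq_zero_iff, pow_add] at hx
  obtain ⟨y, rfl⟩ := Nat.dvd_of_mul_dvd_mul_left (pow_pos (Fact.out : p.Prime).pos m) hx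
  exact ⟨y, Nat.cast_mul _ _⟩

/-- bounds for `S_{p^k,c}(u)` at Type I good primes (Lemma 6.1). -/
theorem statement17 (s : ℕ) (M₁ M₂ : Matrix (Fin s) (Fin s) ℤ)
    (hM₁ : M₁.IsSymm) (hM₂ : M₂.IsSymm)
    (c : ℤ × ℤ) (hc : Int.gcd c.1 c.2 = 1)
    (hdet : (c.1 • M₁ + c.2 • M₂).det ≠ 0)
    (p : ℕ) (hp : p.Prime) (hpd : ¬ ((p : ℤ) ∣ 2 * (c.1 • M₁ + c.2 • M₂).det))
    (k : ℕ) (hk : 1 ≤ k) (u : Fin s → ℤ) :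
    ((Even s ∨ (Odd s ∧ Even k)) →
      ‖Sq s M₁ M₂ (p ^ k) 1 c u‖ ≤
        (p : ℝ) ^ (((s : ℝ) * k) / 2) *
          (Int.gcd (u ⬝ᵥ ((c.1 • M₁ + c.2 • M₂).adjugate.mulVec u)) ((p : ℤ) ^ k) : ℝ)) ∧
    ((Odd s ∧ Odd k) →
      ((u ⬝ᵥ ((c.1 • M₁ + c.2 • M₂).adjugate.mulVec u) = 0 →
          Sq s M₁ M₂ (p ^ k) 1 c u = 0) ∧
        (u ⬝ᵥ ((c.1 • M₁ + c.2 • M₂).adjugate.mulVec u) ≠ 0 →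
          ‖Sq s M₁ M₂ (p ^ k) 1 c u‖ ≤
            (p : ℝ) ^ (((k : ℝ) * ((s : ℝ) + 1)) / 2) *
              (Int.gcd (u ⬝ᵥ ((c.1 • M₁ + c.2 • M₂).adjugate.mulVec u))
                ((p : ℤ) ^ k) : ℝ) ^ ((1 : ℝ) / 2)))) := by
  have : Fact p.Prime := ⟨hp⟩
  have hp2 : p ≠ 2 := by
    rintro rfl
    exact hpd (Dvd.intro _ rfl)
  have hk0 : k ≠ 0 := Nat.one_le_iff_ne_zero.mp hk
  have hM : (c.1 • M₁ + c.2 • M₂).IsSymm := (hM₁.smul _).add (hM₂.smul _)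
  have hd : IsUnit (((2 * (c.1 • M₁ + c.2 • M₂).det : ℤ)) : ZMod (p ^ k)) :=
    isUnit_intCast_zmod_prime_pow hpd
  have hQ := separatingLeft_polarBilin_zmodForm hM hd
  have hcard : Fintype.card (Fin s → ZMod (p ^ k)) = p ^ (k * s) := by
    rw [Fintype.card_fun, ZMod.card, Fintype.card_fin, pow_mul]
  obtain ⟨a, ha, hS⟩ := Sq_one_eq_sum_quadGaussSum M₁ M₂ hc hM hd u
  rw [hS]
  have hp0 : (0 : ℝ) ≤ p := p.cast_nonneg
  refine ⟨fun h => ?_, fun ⟨hs, hk'⟩ => ?_⟩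
  · have hf : ∀ t, IsUnit t → quadGaussSum (zmodForm (p ^ k) (c.1 • M₁ + c.2 • M₂)) t
        = quadGaussSum (zmodForm (p ^ k) (c.1 • M₁ + c.2 • M₂)) 1 := fun t ht => by
      rcases Nat.even_or_odd k with hk' | hk'
      · obtain ⟨m, rfl⟩ := hk'
        refine quadGaussSum_eq_of_sq_eq_zero (m := ((p ^ m : ℕ) : ZMod (p ^ (m + m)))) hQ ?_ ?_ ht
        · rw [← Nat.cast_pow, ← pow_mul, mul_two, ZMod.natCast_self]
        · intro x hx
          choose y hy using fun i => exists_eq_prime_pow_mul (congrFun hx i)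
          exact ⟨y, funext hy⟩
      · have hs : Even s := h.resolve_right fun h' => Nat.not_odd_iff_even.mpr h'.2 hk'
        exact quadGaussSum_eq_quadGaussSum_one hp2 hk' hQ
          (hcard ▸ (hs.mul_left k).isSquare_pow p) ht
    refine (norm_sum_units_mul_stdAddChar_le hk0 hf ha).trans_eq ?_
    congr 1
    refine (pow_left_inj₀ (norm_nonneg _) (by positivity) two_ne_zero).mp ?_
    rw [norm_quadGaussSum_sq hQ isUnit_one, hcard, ← Real.rpow_mul_natCast hp0, Nat.cast_pow,
      ← Real.rpow_natCast]
    congr 1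
    push_cast
    ring
  · have hV : ¬ IsSquare (Fintype.card (Fin s → ZMod (p ^ k))) :=
      hcard ▸ not_isSquare_prime_pow hp (hk'.mul hs)
    refine ⟨fun hF => ?_, fun _ => ?_⟩
    · simp only [hF, Int.cast_zero, mul_zero, AddChar.map_zero_eq_one, mul_one]
      exact sum_units_quadGaussSum_eq_zero hp2 hk0 hQ hV
    · refine (pow_le_pow_iff_left₀ (norm_nonneg _) (by positivity) two_ne_zero).mp ?_
      refine (norm_sq_sum_units_quadGaussSum_le_gcd hp2 hk0 hQ hV ha).trans_eq ?_
      rw [mul_pow, ← Real.rpow_mul_natCast hp0, ← Real.rpow_mul_natCast (Nat.cast_nonneg _), hcard,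
        ← mul_assoc, Nat.cast_pow, ← pow_add, ← Real.rpow_natCast]
      congr 1
      · congr 1
        push_cast
        ring
      · norm_num
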